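/- Let M = (d, Q, δ) be a reset counter machine with states p_init, p_final ∈ Q, and let G(M) be the associated first-order grammar. Let r = (p, op, q) ∈ δ with op = inc(c_i) or op = reset(c_i), and let T₁, …, T_{2d} be terms over the nonterminals of G(M). If A_p(T₁,…,T_{2d}) ∼ B_p(T₁,…,T_{2d}) in L_{G(M)}, then A_q(T'₁,…,T'_{2d}) ∼ B_q(T'₁,…,T'_{2d}), where for op = inc(c_i): T'_{2i−1} = I(T_{2i−1}) and T'_j = T_j for j ≠ 2i−1; and for op = reset(c_i): T'_{2i−1} = T'_{2i} = ⊥ and T'_j = T_j for j ∉ {2i−1, 2i}. -/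

import Mathlib

/-!
For `op = inc(c_i)` and `op = reset(c_i)` the action `(p, op, q)` labels exactly one rule of `A_p`
and exactly one rule of `B_p`, and both rules transform the arguments in the same way. Hence the
move `A_p(T₁,…,T_{2d}) → A_q(T'₁,…,T'_{2d})` can only be answered by
`B_p(T₁,…,T_{2d}) → B_q(T'₁,…,T'_{2d})`, so bisimilarity passes to the two successors
(`Grammar.Bisim.of_unique_step`).
-/

/-- First-order terms over a set `N` of function symbols (nonterminals);
variables `x_{i+1}` are represented as `var i`. -/
inductive FOTerm (N : Type) : Type
  | var : ℕ → FOTerm N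
  | app : N → List (FOTerm N) → FOTerm N

/-- Substitution of terms for variables. -/
def FOTerm.subst {N : Type} (σ : ℕ → FOTerm N) : FOTerm N → FOTerm N
  | .var i => σ i
  | .app A ts => .app A (ts.attach.map fun ⟨t, _⟩ => t.subst σ)

/-- A first-order grammar: ranked nonterminals, actions, and root-rewriting rules;
`Rule A a V` means the rule `A(x₁,…,x_{arity A}) →a V` is in the grammar. -/
structure Grammar where
  N : Type
  arity : N → ℕ
  Act : Type
  Rule : N → Act → FOTerm N → Prop

/-- The labelled transition system `L_G` induced by a grammar: each rule
`A(x₁,…,x_m) →a V` induces transitions `(A(x₁,…,x_m))σ →a Vσ` for all substitutions σ. -/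
inductive Grammar.Step (G : Grammar) : FOTerm G.N → G.Act → FOTerm G.N → Prop
  | step (A : G.N) (a : G.Act) (V : FOTerm G.N) (σ : ℕ → FOTerm G.N) :
      G.Rule A a V →
      G.Step (.app A ((List.range (G.arity A)).map σ)) a (V.subst σ)

/-- A (symmetric) bisimulation for the LTS `L_G`. -/
def Grammar.IsBisimulation (G : Grammar) (B : FOTerm G.N → FOTerm G.N → Prop) : Prop :=
  (∀ T U, B T U → B U T) ∧
  ∀ T U, B T U → ∀ a T', G.Step T a T' → ∃ U', G.Step U a U' ∧ B T' U'

/-- Bisimilarity: `T ∼ U` iff some bisimulation contains `(T, U)`. -/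
def Grammar.Bisim (G : Grammar) (T U : FOTerm G.N) : Prop :=
  ∃ B, G.IsBisimulation B ∧ B T U

/-- Operations of a reset counter machine with `d` counters. -/
inductive RCMOp (d : ℕ) : Type
  | inc : Fin d → RCMOp d
  | dec : Fin d → RCMOp d
  | reset : Fin d → RCMOp d

/-- A reset counter machine `M = (d, Q, δ)`. -/
structure RCM where
  d : ℕ
  Q : Type
  finQ : Finite Q
  δ : Q → RCMOp d → Q → Prop

/-- The step relation on configurations `(q, n̄) ∈ Q × ℕ^d` of an RCM. -/
inductive RCM.StepR (M : RCM) : (M.Q × (Fin M.d → ℕ)) → (M.Q × (Fin M.d → ℕ)) → Prop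
  | inc {p q : M.Q} {i : Fin M.d} {n : Fin M.d → ℕ} :
      M.δ p (.inc i) q → M.StepR (p, n) (q, Function.update n i (n i + 1))
  | dec {p q : M.Q} {i : Fin M.d} {n : Fin M.d → ℕ} :
      M.δ p (.dec i) q → 0 < n i → M.StepR (p, n) (q, Function.update n i (n i - 1))
  | reset {p q : M.Q} {i : Fin M.d} {n : Fin M.d → ℕ} :
      M.δ p (.reset i) q → M.StepR (p, n) (q, Function.update n i 0)

/-- `pfin` is reachable from configuration `c`: `c →* (pfin, m̄)` for some `m̄`. -/
def RCM.ReachesFinal (M : RCM) (pfin : M.Q) (c : M.Q × (Fin M.d → ℕ)) : Prop :=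
  ∃ m : Fin M.d → ℕ, Relation.ReflTransGen M.StepR c (pfin, m)

/-- Nonterminals of the grammar `G(M)`: unary `I`, nullary `bot`, and
`A_p, B_p, A_(p,i), B_(p,i,1), B_(p,i,2)` of arity `2d` for `p ∈ Q`, `1 ≤ i ≤ d`. -/
inductive GNT (Q : Type) (d : ℕ) : Type
  | I : GNT Q d
  | bot : GNT Q d
  | A : Q → GNT Q d
  | B : Q → GNT Q d
  | Ai : Q → Fin d → GNT Q d
  | B1 : Q → Fin d → GNT Q d
  | B2 : Q → Fin d → GNT Q d

def GNT.arity {Q : Type} {d : ℕ} : GNT Q d → ℕ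
  | .I => 1
  | .bot => 0
  | _ => 2 * d

/-- Actions of `G(M)`: the instructions of `M`, plus auxiliary actions `a` and `b`. -/
inductive GAct (Q : Type) (d : ℕ) : Type
  | instr : Q → RCMOp d → Q → GAct Q d
  | a : GAct Q d
  | b : GAct Q d

/-- The tuple of variables `x̄ = (x₁,…,x_{2d})`. -/
def xbar (Q : Type) (d : ℕ) : List (FOTerm (GNT Q d)) :=
  (List.range (2 * d)).map FOTerm.var

/-- The rules of the grammar `G(M)` (for final state `pfin`). -/
inductive GRule (M : RCM) (pfin : M.Q) :
    GNT M.Q M.d → GAct M.Q M.d → FOTerm (GNT M.Q M.d) → Prop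
  | irule : GRule M pfin .I .a (.var 0)
  | finrule : GRule M pfin (.A pfin) .a (.app .bot [])
  | incA {p q : M.Q} {i : Fin M.d} : M.δ p (.inc i) q →
      GRule M pfin (.A p) (.instr p (.inc i) q)
        (.app (.A q) ((xbar M.Q M.d).set (2 * (i : ℕ)) (.app .I [.var (2 * (i : ℕ))])))
  | incB {p q : M.Q} {i : Fin M.d} : M.δ p (.inc i) q →
      GRule M pfin (.B p) (.instr p (.inc i) q)
        (.app (.B q) ((xbar M.Q M.d).set (2 * (i : ℕ)) (.app .I [.var (2 * (i : ℕ))])))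
  | resetA {p q : M.Q} {i : Fin M.d} : M.δ p (.reset i) q →
      GRule M pfin (.A p) (.instr p (.reset i) q)
        (.app (.A q) (((xbar M.Q M.d).set (2 * (i : ℕ)) (.app .bot [])).set
          (2 * (i : ℕ) + 1) (.app .bot [])))
  | resetB {p q : M.Q} {i : Fin M.d} : M.δ p (.reset i) q →
      GRule M pfin (.B p) (.instr p (.reset i) q)
        (.app (.B q) (((xbar M.Q M.d).set (2 * (i : ℕ)) (.app .bot [])).set
          (2 * (i : ℕ) + 1) (.app .bot [])))
  | decA {p q : M.Q} {i : Fin M.d} : M.δ p (.dec i) q →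
      GRule M pfin (.A p) (.instr p (.dec i) q) (.app (.Ai q i) (xbar M.Q M.d))
  | decAB1 {p q : M.Q} {i : Fin M.d} : M.δ p (.dec i) q →
      GRule M pfin (.A p) (.instr p (.dec i) q) (.app (.B1 q i) (xbar M.Q M.d))
  | decAB2 {p q : M.Q} {i : Fin M.d} : M.δ p (.dec i) q →
      GRule M pfin (.A p) (.instr p (.dec i) q) (.app (.B2 q i) (xbar M.Q M.d))
  | decBB1 {p q : M.Q} {i : Fin M.d} : M.δ p (.dec i) q →
      GRule M pfin (.B p) (.instr p (.dec i) q) (.app (.B1 q i) (xbar M.Q M.d))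
  | decBB2 {p q : M.Q} {i : Fin M.d} : M.δ p (.dec i) q →
      GRule M pfin (.B p) (.instr p (.dec i) q) (.app (.B2 q i) (xbar M.Q M.d))
  | auxAa {p q : M.Q} {i : Fin M.d} : M.δ p (.dec i) q →
      GRule M pfin (.Ai q i) .a
        (.app (.A q) ((xbar M.Q M.d).set (2 * (i : ℕ) + 1) (.app .I [.var (2 * (i : ℕ) + 1)])))
  | auxB1a {p q : M.Q} {i : Fin M.d} : M.δ p (.dec i) q →
      GRule M pfin (.B1 q i) .a
        (.app (.B q) ((xbar M.Q M.d).set (2 * (i : ℕ) + 1) (.app .I [.var (2 * (i : ℕ) + 1)])))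
  | auxB2a {p q : M.Q} {i : Fin M.d} : M.δ p (.dec i) q →
      GRule M pfin (.B2 q i) .a
        (.app (.A q) ((xbar M.Q M.d).set (2 * (i : ℕ) + 1) (.app .I [.var (2 * (i : ℕ) + 1)])))
  | auxAb {p q : M.Q} {i : Fin M.d} : M.δ p (.dec i) q →
      GRule M pfin (.Ai q i) .b (.var (2 * (i : ℕ)))
  | auxB1b {p q : M.Q} {i : Fin M.d} : M.δ p (.dec i) q →
      GRule M pfin (.B1 q i) .b (.var (2 * (i : ℕ)))
  | auxB2b {p q : M.Q} {i : Fin M.d} : M.δ p (.dec i) q →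
      GRule M pfin (.B2 q i) .b (.var (2 * (i : ℕ) + 1))

/-- The grammar `G(M)` associated with an RCM `M` and final state `pfin`. -/
@[reducible] def GrammarOf (M : RCM) (pfin : M.Q) : Grammar where
  N := GNT M.Q M.d
  arity := GNT.arity
  Act := GAct M.Q M.d
  Rule := GRule M pfin

/-- `iterTerm I bot n` is the term `Iⁿ⊥`. -/
def iterTerm {N : Type} (I bot : N) : ℕ → FOTerm N
  | 0 => .app bot []
  | n + 1 => .app I [iterTerm I bot n]

/-- `Iⁿ⊥` in the grammar `G(M)`. -/
@[reducible] def ipow {Q : Type} {d : ℕ} (n : ℕ) : FOTerm (GNT Q d) :=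
  iterTerm GNT.I GNT.bot n

/-- The `2d`-tuple of arguments `(I^{n₁}⊥, I^{n'₁}⊥, …, I^{n_d}⊥, I^{n'_d}⊥)`. -/
def vterms {Q : Type} {d : ℕ} (n n' : Fin d → ℕ) : List (FOTerm (GNT Q d)) :=
  (List.finRange d).flatMap fun i => [ipow (n i), ipow (n' i)]

/-- A move of the left term for which the right term has at most one possible answer leads to
bisimilar successors. -/
theorem Grammar.Bisim.of_unique_step {G : Grammar} {T U T' U' : FOTerm G.N} {a : G.Act}
    (h : G.Bisim T U) (hT : G.Step T a T') (hU : ∀ U'', G.Step U a U'' → U'' = U') :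
    G.Bisim T' U' := by
  obtain ⟨B, hB, hTU⟩ := h
  obtain ⟨U'', hstep, hB'⟩ := hB.2 T U hTU a T' hT
  exact ⟨B, hB, hU U'' hstep ▸ hB'⟩

theorem Grammar.step_app_iff {G : Grammar} {A : G.N} {ts : List (FOTerm G.N)} {a : G.Act}
    {T' : FOTerm G.N} :
    G.Step (.app A ts) a T' ↔ ∃ V σ, G.Rule A a V ∧ ts = (List.range (G.arity A)).map σ ∧
      T' = V.subst σ := by
  constructor
  · rintro ⟨_, _, V, σ, h⟩
    exact ⟨V, σ, h, rfl, rfl⟩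
  · rintro ⟨V, σ, h, rfl, rfl⟩
    exact .step A a V σ h

theorem FOTerm.subst_app {N : Type} (σ : ℕ → FOTerm N) (A : N) (ts : List (FOTerm N)) :
    (FOTerm.app A ts).subst σ = .app A (ts.map (FOTerm.subst σ)) := by
  simp [FOTerm.subst]

theorem map_subst_xbar {Q : Type} {d : ℕ} (σ : ℕ → FOTerm (GNT Q d)) :
    (xbar Q d).map (FOTerm.subst σ) = (List.range (2 * d)).map σ := by
  simp [xbar, FOTerm.subst]

theorem exists_ofFn_eq_map_range {N : Type} (A : N) {n : ℕ} (Ts : Fin n → FOTerm N) :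
    ∃ σ : ℕ → FOTerm N, List.ofFn Ts = (List.range n).map σ := by
  refine ⟨fun k => if h : k < n then Ts ⟨k, h⟩ else .app A [], ?_⟩
  apply List.ext_getElem
  · simp
  · intro k h₁ h₂
    have hk : k < n := by simpa using h₁
    simp [hk]

/-- The substitution matched by an argument tuple is determined on the variables of the rule. -/
theorem apply_of_ofFn_eq_map_range {α : Type} {n : ℕ} {Ts : Fin n → α} {σ : ℕ → α}
    (h : List.ofFn Ts = (List.range n).map σ) (k : ℕ) (hk : k < n) : σ k = Ts ⟨k, hk⟩ := by
  have h' := congrArg (fun l => l[k]?) h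
  simpa [hk, eq_comm] using h'

theorem subst_inc {Q : Type} {d : ℕ} {Ts : Fin (2 * d) → FOTerm (GNT Q d)}
    {σ : ℕ → FOTerm (GNT Q d)} (h : List.ofFn Ts = (List.range (2 * d)).map σ)
    (X : GNT Q d) (k : ℕ) (hk : k < 2 * d) :
    (FOTerm.app X ((xbar Q d).set k (.app .I [.var k]))).subst σ =
      .app X ((List.ofFn Ts).set k (.app .I [Ts ⟨k, hk⟩])) := by
  simp only [FOTerm.subst_app, List.map_set, map_subst_xbar, ← h, List.map_cons, List.map_nil,
    FOTerm.subst, apply_of_ofFn_eq_map_range h k hk]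

theorem subst_reset {Q : Type} {d : ℕ} {Ts : Fin (2 * d) → FOTerm (GNT Q d)}
    {σ : ℕ → FOTerm (GNT Q d)} (h : List.ofFn Ts = (List.range (2 * d)).map σ)
    (X : GNT Q d) (k l : ℕ) :
    (FOTerm.app X (((xbar Q d).set k (.app .bot [])).set l (.app .bot []))).subst σ =
      .app X (((List.ofFn Ts).set k (.app .bot [])).set l (.app .bot [])) := by
  simp only [FOTerm.subst_app, List.map_set, map_subst_xbar, ← h, List.map_nil]

/-- Let `r = (p, op, q) ∈ δ` with `op = inc(c_i)` or `op = reset(c_i)`.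
If `A_p(T₁,…,T_{2d}) ∼ B_p(T₁,…,T_{2d})` in `L_{G(M)}`, then `A_q(T'₁,…,T'_{2d}) ∼
B_q(T'₁,…,T'_{2d})`, where for `inc(c_i)`: `T'_{2i−1} = I(T_{2i−1})` and `T'_j = T_j`
otherwise; for `reset(c_i)`: `T'_{2i−1} = T'_{2i} = ⊥` and `T'_j = T_j` otherwise. -/
theorem bisim_preserved_inc_reset (M : RCM) (pinit pfin : M.Q) (p q : M.Q) (i : Fin M.d)
    (Ts : Fin (2 * M.d) → FOTerm (GNT M.Q M.d))
    (hbis : (GrammarOf M pfin).Bisim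
      (.app (.A p) (List.ofFn Ts)) (.app (.B p) (List.ofFn Ts))) :
    (M.δ p (.inc i) q →
      (GrammarOf M pfin).Bisim
        (.app (.A q) ((List.ofFn Ts).set (2 * (i : ℕ))
          (.app .I [Ts ⟨2 * (i : ℕ), by have := i.isLt; omega⟩])))
        (.app (.B q) ((List.ofFn Ts).set (2 * (i : ℕ))
          (.app .I [Ts ⟨2 * (i : ℕ), by have := i.isLt; omega⟩])))) ∧
    (M.δ p (.reset i) q →
      (GrammarOf M pfin).Bisim
        (.app (.A q) (((List.ofFn Ts).set (2 * (i : ℕ)) (.app .bot [])).set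
          (2 * (i : ℕ) + 1) (.app .bot [])))
        (.app (.B q) (((List.ofFn Ts).set (2 * (i : ℕ)) (.app .bot [])).set
          (2 * (i : ℕ) + 1) (.app .bot [])))) := by
  obtain ⟨σ, hσ⟩ := exists_ofFn_eq_map_range GNT.bot Ts
  have hi : 2 * (i : ℕ) < 2 * M.d := by have := i.isLt; omega
  constructor
  · intro hδ
    refine hbis.of_unique_step (a := .instr p (.inc i) q)
      (Grammar.step_app_iff.2 ⟨_, σ, .incA hδ, hσ, (subst_inc hσ _ _ hi).symm⟩) ?_
    intro U hU
    obtain ⟨V, τ, hV, hτ, rfl⟩ := Grammar.step_app_iff.1 hU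
    cases hV
    exact subst_inc hτ _ _ hi
  · intro hδ
    refine hbis.of_unique_step (a := .instr p (.reset i) q)
      (Grammar.step_app_iff.2 ⟨_, σ, .resetA hδ, hσ, (subst_reset hσ _ _ _).symm⟩) ?_
    intro U hU
    obtain ⟨V, τ, hV, hτ, rfl⟩ := Grammar.step_app_iff.1 hU
    cases hV
    exact subst_reset hτ _ _ _
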